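/- Assume A is irreducible (for all i, j there exists k ≥ 1 with (A^k)_{ij} > 0) and A + Aᵀ is primitive (there exists k ≥ 1 such that all entries of (A + Aᵀ)^k are positive). Then there exists v ∈ ℝⁿ with f(v) = v, and, setting P = (1/2)·(diag(Aᵀe^v)^{−1} Aᵀ diag(e^v) + diag(Ae^{−v})^{−1} A diag(e^{−v})) and ρ₂ = max{|λ| : λ a complex eigenvalue of P, λ ≠ 1}, one has ρ₂ < 1 and for every x ∈ ℝⁿ there exists c ∈ ℝ such that limsup_{k→∞} ‖f^k(x) − v − c𝟙‖_∞^{1/k} ≤ ρ₂; in particular the fixed-point iteration p^{k+1} = f(p^k) converges linearly at rate ρ₂. -/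

import Mathlib

open BigOperators Filter Matrix

/-- The ideal HOTS map. -/
noncomputable def hotsMap {n : ℕ} (A : Matrix (Fin n) (Fin n) ℝ) (x : Fin n → ℝ) : Fin n → ℝ :=
  fun i => (1 / 2) * (Real.log (∑ j, A j i * Real.exp (x j))
    - Real.log (∑ j, A i j * Real.exp (-(x j))))

/-- The matrix `P = (1/2)(diag(Aᵀe^v)⁻¹ Aᵀ diag(e^v) + diag(Ae^{−v})⁻¹ A diag(e^{−v}))`. -/
noncomputable def hotsJacMatrix {n : ℕ} (A : Matrix (Fin n) (Fin n) ℝ) (v : Fin n → ℝ) :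
    Matrix (Fin n) (Fin n) ℝ :=
  (1 / 2 : ℝ) •
    ((Matrix.diagonal fun i => ∑ l, A l i * Real.exp (v l))⁻¹ * Aᵀ *
        Matrix.diagonal (fun j => Real.exp (v j)) +
      (Matrix.diagonal fun i => ∑ l, A i l * Real.exp (-(v l)))⁻¹ * A *
        Matrix.diagonal (fun j => Real.exp (-(v j))))

/-- `ρ₂ = max{|λ| : λ eigenvalue of P, λ ≠ 1}`. -/
noncomputable def secondEigRadius {n : ℕ} (P : Matrix (Fin n) (Fin n) ℝ) : ℝ :=
  sSup {r : ℝ | ∃ μ : ℂ, μ ∈ spectrum ℂ (P.map (Complex.ofReal)) ∧ μ ≠ 1 ∧ r = ‖μ‖}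

/-!
The HOTS map `f` is topical: it is monotone and commutes with the addition of constants, hence is
nonexpansive for the sup norm. Its fixed points are the minimisers of the convex function
`∑ i, ∑ j, A i j * exp (x i - x j)`, whose sublevel sets are compact modulo constants when `A` is
irreducible.

If `(A + Aᵀ)^m` is positive, increasing one coordinate of `x` strictly increases every coordinate
of `f^m x`. A limit point `y` of an orbit keeps its distance to every fixed point under iteration.
Taking a fixed point `u` below the orbit, some coordinate of `f^m y` equals that of `u + dist y u`;
since `y ≤ u + dist y u`, strictness forces equality. So the orbit converges to a translate of the
fixed point.

The Jacobian `P` of `f` at a fixed point `v` is a primitive stochastic matrix satisfying detailed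
balance for the flow through the nodes. It is therefore self-adjoint in a weighted `ℓ²` space, and
contracts the component of a vector orthogonal to the constants by the factor `ρ₂`. That component
controls the whole error: if the iterates tend to `v`, nonexpansiveness around `v + t` gives
`|t| ≤ ‖f^k x - v - t‖`.
-/

section Nonexpansive

variable {X : Type*} [PseudoMetricSpace X] {f : X → X} {u x y : X}

lemma antitone_dist_iterate (hf : LipschitzWith 1 f) (hu : Function.IsFixedPt f u) (x : X) :
    Antitone fun k => dist (f^[k] x) u :=
  antitone_nat_of_succ_le fun k => by
    simpa [Function.iterate_succ_apply', hu.eq] using hf.dist_le_mul (f^[k] x) u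

lemma dist_le_of_tendsto_iterate (hf : LipschitzWith 1 f) (hu : Function.IsFixedPt f u)
    (hx : Tendsto (fun k => f^[k] x) atTop (nhds y)) (k : ℕ) : dist y u ≤ dist (f^[k] x) u :=
  (antitone_dist_iterate hf hu x).le_of_tendsto (hx.dist tendsto_const_nhds) k

lemma exists_tendsto_iterate_subseq [ProperSpace X] (hf : LipschitzWith 1 f)
    (hu : Function.IsFixedPt f u) (x : X) :
    ∃ y, ∃ φ : ℕ → ℕ, StrictMono φ ∧ Tendsto (fun k => f^[φ k] x) atTop (nhds y) := by
  obtain ⟨y, -, φ, hφ, hy⟩ := tendsto_subseq_of_bounded (x := fun k => f^[k] x)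
    Metric.isBounded_closedBall fun k => antitone_dist_iterate hf hu x k.zero_le
  exact ⟨y, φ, hφ, hy⟩

lemma tendsto_iterate_of_tendsto_subseq (hf : LipschitzWith 1 f) (hy : Function.IsFixedPt f y)
    {φ : ℕ → ℕ} (hφ : Tendsto φ atTop atTop)
    (hx : Tendsto (fun k => f^[φ k] x) atTop (nhds y)) :
    Tendsto (fun k => f^[k] x) atTop (nhds y) := by
  rw [tendsto_iff_dist_tendsto_zero] at hx ⊢
  exact (tendsto_iff_tendsto_subseq_of_antitone (antitone_dist_iterate hf hy x) hφ).2 hx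

lemma dist_iterate_eq_of_tendsto_subseq (hf : LipschitzWith 1 f) (hu : Function.IsFixedPt f u)
    {φ : ℕ → ℕ} (hφ : Tendsto φ atTop atTop)
    (hx : Tendsto (fun k => f^[φ k] x) atTop (nhds y)) (m : ℕ) :
    dist (f^[m] y) u = dist y u := by
  obtain ⟨ℓ, hℓ⟩ : ∃ ℓ, Tendsto (fun k => dist (f^[k] x) u) atTop (nhds ℓ) :=
    ⟨_, tendsto_atTop_ciInf (antitone_dist_iterate hf hu x) ⟨0, by rintro _ ⟨k, rfl⟩; positivity⟩⟩
  have hy : dist y u = ℓ :=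
    tendsto_nhds_unique (hx.dist tendsto_const_nhds) (hℓ.comp hφ)
  have hm : Tendsto (fun k => dist (f^[m + φ k] x) u) atTop (nhds (dist (f^[m] y) u)) := by
    simp only [Function.iterate_add_apply]
    exact (((hf.continuous.iterate m).tendsto y).comp hx).dist tendsto_const_nhds
  rw [hy]
  exact tendsto_nhds_unique hm
    (hℓ.comp (tendsto_atTop_mono (fun k => Nat.le_add_left (φ k) m) hφ))

end Nonexpansive

lemma exists_apply_eq_add_dist {ι : Type*} [Fintype ι] [Nonempty ι] {u z : ι → ℝ} (h : u ≤ z) :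
    ∃ i, z i = u i + dist z u := by
  obtain ⟨i, hi⟩ := Finite.exists_max fun i => dist (z i) (u i)
  have hdist : dist z u = z i - u i := by
    rw [← abs_of_nonneg (sub_nonneg.2 (h i)), ← Real.dist_eq]
    exact le_antisymm ((dist_pi_le_iff dist_nonneg).2 hi) (dist_le_pi_dist z u i)
  exact ⟨i, by rw [hdist, add_sub_cancel]⟩

/-- Topical maps of nonlinear Perron–Frobenius theory: monotone and commuting with the addition of
constant vectors. Both properties together make the map nonexpansive for the sup norm. -/
structure IsTopical {ι : Type*} (f : (ι → ℝ) → ι → ℝ) : Prop where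
  monotone : Monotone f
  map_add_const (x : ι → ℝ) (t : ℝ) : f (x + fun _ => t) = f x + fun _ => t

namespace IsTopical

variable {ι : Type*} {f : (ι → ℝ) → ι → ℝ} {v : ι → ℝ}

lemma isFixedPt_add_const (hf : IsTopical f) (hv : Function.IsFixedPt f v) (t : ℝ) :
    Function.IsFixedPt f (v + fun _ => t) := by
  rw [Function.IsFixedPt, hf.map_add_const, hv.eq]

lemma hasFDerivAt_add_const [Finite ι] (hf : IsTopical f) {f' : (ι → ℝ) →L[ℝ] ι → ℝ}
    (hf' : HasFDerivAt f f' v) (t : ℝ) : HasFDerivAt f f' (v + fun _ => t) := by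
  cases nonempty_fintype ι
  have hsub : (fun y => f (y - fun _ => t) + fun _ => t) = f := by
    funext y
    rw [← hf.map_add_const, sub_add_cancel]
  have hv : HasFDerivAt f f' ((v + fun _ => t) - fun _ => t) := by rwa [add_sub_cancel_right]
  simpa only [hsub] using ((hasFDerivAt_comp_sub _).2 hv).add_const (fun _ => t)

lemma lipschitzWith_one [Fintype ι] (hf : IsTopical f) : LipschitzWith 1 f := by
  refine LipschitzWith.of_dist_le_mul fun x y => ?_
  have hle : ∀ x y : ι → ℝ, ∀ i, f x i ≤ f y i + dist x y := fun x y i => by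
    have hxy : x ≤ y + fun _ => dist x y := fun j =>
      sub_le_iff_le_add'.1 ((le_abs_self _).trans (dist_le_pi_dist x y j))
    simpa [hf.map_add_const] using hf.monotone hxy i
  rw [NNReal.coe_one, one_mul, dist_pi_le_iff dist_nonneg]
  intro i
  rw [Real.dist_eq, abs_sub_le_iff]
  exact ⟨by linarith [hle x y i], by linarith [hle y x i, dist_comm x y]⟩

lemma norm_iterate_sub_le [Fintype ι] (hf : IsTopical f) (hv : Function.IsFixedPt f v) {x : ι → ℝ}
    (hx : Tendsto (fun k => f^[k] x) atTop (nhds v)) (k : ℕ) (t : ℝ) :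
    ‖f^[k] x - v‖ ≤ 2 * ‖f^[k] x - v - fun _ => t‖ := by
  have hlim : ‖(fun _ : ι => t)‖ ≤ ‖f^[k] x - v - fun _ => t‖ := by
    have := dist_le_of_tendsto_iterate hf.lipschitzWith_one (hf.isFixedPt_add_const hv t) hx k
    rwa [dist_self_add_right, dist_eq_norm, ← sub_sub] at this
  linarith [norm_le_norm_sub_add (f^[k] x - v) fun _ => t]

theorem exists_tendsto_iterate [Finite ι] (hf : IsTopical f) (hv : Function.IsFixedPt f v) {m : ℕ}
    (hm : ∀ ⦃x y : ι → ℝ⦄, x ≤ y → ∀ i, f^[m] x i = f^[m] y i → x = y) (x : ι → ℝ) :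
    ∃ c : ℝ, Tendsto (fun k => f^[k] x) atTop (nhds (v + fun _ => c)) := by
  cases nonempty_fintype ι
  rcases isEmpty_or_nonempty ι with _ | _
  · exact ⟨0, tendsto_const_nhds.congr fun _ => Subsingleton.elim _ _⟩
  have hlip := hf.lipschitzWith_one
  set u : ι → ℝ := v + fun _ => -dist x v with hu_def
  have hu : Function.IsFixedPt f u := hf.isFixedPt_add_const hv _
  have hux (k : ℕ) : u ≤ f^[k] x := fun i => by
    have hi := (dist_le_pi_dist (f^[k] x) v i).trans (antitone_dist_iterate hlip hv x k.zero_le)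
    rw [Real.dist_eq, abs_le] at hi
    exact le_sub_iff_add_le'.1 hi.1
  obtain ⟨y, φ, hφ, hy⟩ := exists_tendsto_iterate_subseq hlip hu x
  have huy : u ≤ y := ge_of_tendsto' hy fun k => hux (φ k)
  have hyu : y ≤ u + fun _ => dist y u := fun i =>
    sub_le_iff_le_add'.1 ((le_abs_self _).trans (dist_le_pi_dist y u i))
  have hum : u ≤ f^[m] y := (hu.iterate m).eq ▸ hf.monotone.iterate m huy
  obtain ⟨i, hi⟩ := exists_apply_eq_add_dist hum
  rw [dist_iterate_eq_of_tendsto_subseq hlip hu hφ.tendsto_atTop hy] at hi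
  obtain ⟨t, rfl⟩ : ∃ t, y = u + fun _ => t :=
    ⟨_, hm hyu i (by rw [hi, ((hf.isFixedPt_add_const hu _).iterate m).eq, Pi.add_apply])⟩
  refine ⟨-dist x v + t, ?_⟩
  have hlim := tendsto_iterate_of_tendsto_subseq hlip (hf.isFixedPt_add_const hu t)
    hφ.tendsto_atTop hy
  rwa [hu_def, add_assoc] at hlim

end IsTopical

section Rate

variable {E F : Type*} [NormedAddCommGroup E] [NormedAddCommGroup F]

lemma isBigO_pow_of_eventually_norm_succ_le {a : ℕ → E} {r : ℝ} (hr : 0 < r)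
    (h : ∀ᶠ k in atTop, ‖a (k + 1)‖ ≤ r * ‖a k‖) : a =O[atTop] fun k => r ^ k := by
  obtain ⟨N, hN⟩ := eventually_atTop.1 h
  refine Asymptotics.IsBigO.of_bound (‖a N‖ / r ^ N) ?_
  filter_upwards [eventually_ge_atTop N] with k hk
  obtain ⟨m, rfl⟩ := Nat.exists_eq_add_of_le hk
  have hgeom : ‖a (N + m)‖ ≤ r ^ m * ‖a N‖ :=
    le_geom (u := fun j => ‖a (N + j)‖) hr.le m fun j _ => hN _ (Nat.le_add_right N j)
  rw [norm_pow, Real.norm_of_nonneg hr.le, pow_add, div_mul_eq_mul_div, ← mul_assoc, mul_right_comm,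
    mul_div_cancel_right₀ _ (pow_pos hr N).ne', mul_comm]
  exact hgeom

lemma limsup_norm_rpow_le_of_isBigO {a : ℕ → E} {ρ : ℝ} (hρ : 0 ≤ ρ)
    (h : ∀ r, ρ < r → a =O[atTop] fun k => r ^ k) :
    limsup (fun k : ℕ => ‖a k‖ ^ (1 / (k : ℝ))) atTop ≤ ρ := by
  refine le_of_forall_gt_imp_ge_of_dense fun s hs => ?_
  obtain ⟨r, hρr, hrs⟩ := exists_between hs
  have hr : 0 < r := hρ.trans_lt hρr
  obtain ⟨C, hC, hbound⟩ := (h r hρr).exists_pos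
  have hlim : Tendsto (fun k : ℕ => C ^ (1 / (k : ℝ)) * r) atTop (nhds r) := by
    simpa using ((Real.continuousAt_const_rpow hC.ne').tendsto.comp
      (tendsto_one_div_atTop_nhds_zero_nat (𝕜 := ℝ))).mul_const r
  refine limsup_le_of_le (IsCoboundedUnder.of_frequently_ge (a := 0)
    (.of_forall fun k => by positivity)) ?_
  filter_upwards [hbound.bound, hlim.eventually_lt_const hrs, eventually_ne_atTop 0]
    with k hk hks hk0
  calc ‖a k‖ ^ (1 / (k : ℝ)) ≤ (C * r ^ k) ^ (1 / (k : ℝ)) := by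
        rw [norm_pow, Real.norm_of_nonneg hr.le] at hk
        gcongr
    _ = C ^ (1 / (k : ℝ)) * r := by
        rw [Real.mul_rpow hC.le (by positivity), one_div, Real.pow_rpow_inv_natCast hr.le hk0]
    _ ≤ s := hks.le

variable [NormedSpace ℝ E] [NormedSpace ℝ F]

theorem isBigO_pow_iterate_sub {f : E → E} {f' : E →L[ℝ] E} {v x : E}
    (hf' : HasFDerivAt f f' v) (hv : Function.IsFixedPt f v)
    (hx : Tendsto (fun k => f^[k] x) atTop (nhds v)) {L : E →L[ℝ] F} {ρ r : ℝ} (hρ : 0 ≤ ρ)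
    (hL : ∀ w, ‖L (f' w)‖ ≤ ρ * ‖L w‖)
    (hLO : (fun k => f^[k] x - v) =O[atTop] fun k => L (f^[k] x - v)) (hr : ρ < r) :
    (fun k => f^[k] x - v) =O[atTop] fun k => r ^ k := by
  refine hLO.trans (isBigO_pow_of_eventually_norm_succ_le (hρ.trans_lt hr) ?_)
  have hrem : (fun k => L (f^[k + 1] x - v - f' (f^[k] x - v)))
      =o[atTop] fun k => L (f^[k] x - v) := by
    have := (hf'.isLittleO.comp_tendsto hx).trans_isBigO hLO
    simp only [Function.comp_def, hv.eq, ← Function.iterate_succ_apply'] at this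
    exact (L.isBigO_comp _ _).trans_isLittleO this
  filter_upwards [hrem.bound (sub_pos.2 hr)] with k hk
  calc ‖L (f^[k + 1] x - v)‖
      ≤ ‖L (f^[k + 1] x - v - f' (f^[k] x - v))‖ + ‖L (f' (f^[k] x - v))‖ := by
        rw [L.map_sub (f^[k + 1] x - v)]
        exact norm_le_norm_sub_add _ _
    _ ≤ (r - ρ) * ‖L (f^[k] x - v)‖ + ρ * ‖L (f^[k] x - v)‖ := add_le_add hk (hL _)
    _ = r * ‖L (f^[k] x - v)‖ := by ring

end Rate

lemma IsTopical.limsup_norm_iterate_sub_rpow_le {ι F : Type*} [Fintype ι] [NormedAddCommGroup F]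
    [NormedSpace ℝ F] {f : (ι → ℝ) → ι → ℝ} {v x : ι → ℝ} (hf : IsTopical f)
    (hv : Function.IsFixedPt f v) {f' : (ι → ℝ) →L[ℝ] ι → ℝ} (hf' : HasFDerivAt f f' v)
    (hx : Tendsto (fun k => f^[k] x) atTop (nhds v)) {L : (ι → ℝ) →L[ℝ] F} {ρ K : ℝ} (hρ : 0 ≤ ρ)
    (hL : ∀ w, ‖L (f' w)‖ ≤ ρ * ‖L w‖) (hK : ∀ w, ∃ t : ℝ, ‖w - fun _ => t‖ ≤ K * ‖L w‖) :
    limsup (fun k : ℕ => ‖f^[k] x - v‖ ^ (1 / (k : ℝ))) atTop ≤ ρ := by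
  have hLO : (fun k => f^[k] x - v) =O[atTop] fun k => L (f^[k] x - v) := by
    refine Asymptotics.IsBigO.of_bound (2 * K) (.of_forall fun k => ?_)
    obtain ⟨t, ht⟩ := hK (f^[k] x - v)
    linarith [hf.norm_iterate_sub_le hv hx k t]
  exact limsup_norm_rpow_le_of_isBigO hρ fun r hr => isBigO_pow_iterate_sub hf' hv hx hρ hL hLO hr

section NonnegMatrix

variable {ι : Type*} [Fintype ι] {B M N : Matrix ι ι ℝ}

lemma mul_apply_pos_iff (hM : ∀ i j, 0 ≤ M i j) (hN : ∀ i j, 0 ≤ N i j) {i j : ι} :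
    0 < (M * N) i j ↔ ∃ l, 0 < M i l ∧ 0 < N l j := by
  rw [Matrix.mul_apply, Finset.sum_pos_iff_of_nonneg fun l _ => mul_nonneg (hM i l) (hN l j)]
  simp [(hM i _).lt_iff_ne', (hN _ j).lt_iff_ne', (mul_nonneg (hM i _) (hN _ j)).lt_iff_ne']

variable [DecidableEq ι]

lemma pow_apply_pos_of_forall_pos_imp (hM : ∀ i j, 0 ≤ M i j) (hN : ∀ i j, 0 ≤ N i j)
    (hMN : ∀ i j, 0 < M i j → 0 < N i j) (k : ℕ) {i j : ι} (h : 0 < (M ^ k) i j) :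
    0 < (N ^ k) i j := by
  induction k generalizing i j with
  | zero => simpa using h
  | succ k ih =>
    rw [pow_succ] at h ⊢
    obtain ⟨l, hil, hlj⟩ := (mul_apply_pos_iff (Matrix.pow_apply_nonneg hM k) hM).1 h
    exact (mul_apply_pos_iff (Matrix.pow_apply_nonneg hN k) hN).2 ⟨l, ih hil, hMN l j hlj⟩

lemma isPrimitive_of_forall_pos_imp (hM : M.IsPrimitive) (hN : ∀ i j, 0 ≤ N i j)
    (hMN : ∀ i j, 0 < M i j → 0 < N i j) : N.IsPrimitive := by
  obtain ⟨k, hk, hpos⟩ := hM.exists_pos_pow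
  exact ⟨hN, k, hk, fun i j => pow_apply_pos_of_forall_pos_imp hM.nonneg hN hMN k (hpos i j)⟩

lemma iterate_apply_eq_of_pow_apply_pos {f : (ι → ℝ) → ι → ℝ} (hf : Monotone f)
    (hB : ∀ i j, 0 ≤ B i j)
    (hfB : ∀ ⦃x y⦄, x ≤ y → ∀ ⦃i j⦄, f x i = f y i → 0 < B i j → x j = y j) (k : ℕ)
    {x y : ι → ℝ} (hxy : x ≤ y) {i j : ι} (hi : f^[k] x i = f^[k] y i) (hij : 0 < (B ^ k) i j) :
    x j = y j := by
  induction k generalizing i with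
  | zero =>
    obtain rfl : i = j := by
      by_contra hne
      simp [hne] at hij
    exact hi
  | succ k ih =>
    rw [pow_succ', mul_apply_pos_iff hB (Matrix.pow_apply_nonneg hB k)] at hij
    obtain ⟨l, hil, hlj⟩ := hij
    rw [Function.iterate_succ_apply', Function.iterate_succ_apply'] at hi
    exact ih (hfB (hf.iterate k hxy) hi hil) hlj

end NonnegMatrix

section Stochastic

variable {𝕜 ι : Type*} [RCLike 𝕜] [Fintype ι] [DecidableEq ι] {P : Matrix ι ι ℝ}
  {x : ι → 𝕜} {μ : 𝕜}

lemma pow_mulVec_eq_smul {M : Matrix ι ι 𝕜} (hx : M *ᵥ x = μ • x) (k : ℕ) :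
    M ^ k *ᵥ x = μ ^ k • x := by
  induction k with
  | zero => simp
  | succ k ih =>
    rw [pow_succ, ← Matrix.mulVec_mulVec, hx, Matrix.mulVec_smul, ih, smul_smul, pow_succ']

lemma map_mulVec_const (hP : P ∈ rowStochastic ℝ ι) (c : 𝕜) :
    (P.map (algebraMap ℝ 𝕜) *ᵥ fun _ => c) = fun _ => c := by
  funext i
  simp only [Matrix.mulVec, dotProduct, Matrix.map_apply]
  rw [← Finset.sum_mul, ← map_sum, sum_row_of_mem_rowStochastic hP, map_one, one_mul]

/- At an index where `‖x i‖` is maximal, `μ * x i` is a strictly convex combination of points of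
the ball of radius `‖x i‖`. -/
lemma apply_eq_apply_of_mulVec_eq_smul_of_pos (hP : P ∈ rowStochastic ℝ ι)
    (hpos : ∀ i j, 0 < P i j) (hx : P.map (algebraMap ℝ 𝕜) *ᵥ x = μ • x) (hμ : 1 ≤ ‖μ‖) (i j : ι) :
    x i = x j := by
  by_contra hij
  have : Nonempty ι := ⟨i⟩
  obtain ⟨m, hm⟩ := Finite.exists_max fun i => ‖x i‖
  have hlt : ‖∑ l, P m l • x l‖ < ‖x m‖ :=
    norm_sum_lt_of_strictConvexSpace (fun l _ => (hpos m l).le) (sum_row_of_mem_rowStochastic hP m)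
      (Finset.mem_univ i) (Finset.mem_univ j) hij (hpos m i).ne' (hpos m j).ne' fun l _ => hm l
  have hsum : ∑ l, P m l • x l = μ * x m := by
    simpa [Matrix.mulVec, dotProduct, Algebra.smul_def] using congrFun hx m
  rw [hsum, norm_mul] at hlt
  exact hlt.not_ge (le_mul_of_one_le_left (norm_nonneg _) hμ)

lemma exists_eq_const_of_mulVec_eq_smul (hP : P ∈ rowStochastic ℝ ι) (hprim : P.IsPrimitive)
    (hx : P.map (algebraMap ℝ 𝕜) *ᵥ x = μ • x) (hμ : 1 ≤ ‖μ‖) : ∃ c : 𝕜, x = fun _ => c := by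
  rcases isEmpty_or_nonempty ι with _ | ⟨⟨i⟩⟩
  · exact ⟨0, Subsingleton.elim _ _⟩
  obtain ⟨k, -, hpos⟩ := hprim.exists_pos_pow
  have hPk : (P ^ k).map (algebraMap ℝ 𝕜) *ᵥ x = μ ^ k • x := by
    rw [Matrix.map_pow, pow_mulVec_eq_smul hx]
  have hμk : 1 ≤ ‖μ ^ k‖ := norm_pow μ k ▸ one_le_pow₀ hμ
  exact ⟨x i, funext fun j =>
    apply_eq_apply_of_mulVec_eq_smul_of_pos (pow_mem hP k) hpos hPk hμk j i⟩

lemma norm_lt_one_of_mem_spectrum (hP : P ∈ rowStochastic ℝ ι) (hprim : P.IsPrimitive)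
    (hμ : μ ∈ spectrum 𝕜 (P.map (algebraMap ℝ 𝕜))) (hne : μ ≠ 1) : ‖μ‖ < 1 := by
  rw [← Matrix.spectrum_toLin', ← Module.End.hasEigenvalue_iff_mem_spectrum] at hμ
  obtain ⟨x, hx⟩ := hμ.exists_hasEigenvector
  have hPx : P.map (algebraMap ℝ 𝕜) *ᵥ x = μ • x := hx.apply_eq_smul
  by_contra! hle
  obtain ⟨c, rfl⟩ := exists_eq_const_of_mulVec_eq_smul hP hprim hPx hle
  obtain ⟨i, hi⟩ := Function.ne_iff.1 hx.2
  rw [map_mulVec_const hP] at hPx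
  exact hne ((mul_eq_right₀ hi).1 (congrFun hPx i).symm)

end Stochastic

section SecondEigRadius

variable {n : ℕ} {P : Matrix (Fin n) (Fin n) ℝ}

lemma finite_norm_spectrum_ne_one (P : Matrix (Fin n) (Fin n) ℝ) :
    {r : ℝ | ∃ μ : ℂ, μ ∈ spectrum ℂ (P.map Complex.ofReal) ∧ μ ≠ 1 ∧ r = ‖μ‖}.Finite :=
  ((Matrix.finite_spectrum _).image norm).subset fun _ ⟨μ, hμ, _, hr⟩ => ⟨μ, hμ, hr.symm⟩

lemma secondEigRadius_nonneg (P : Matrix (Fin n) (Fin n) ℝ) : 0 ≤ secondEigRadius P :=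
  Real.sSup_nonneg fun _ ⟨_, _, _, hr⟩ => hr ▸ norm_nonneg _

lemma abs_le_secondEigRadius {lam : ℝ} (hlam : lam ∈ spectrum ℝ P) (hne : lam ≠ 1) :
    |lam| ≤ secondEigRadius P := by
  have hmem : (lam : ℂ) ∈ spectrum ℂ (P.map Complex.ofReal) := by
    rw [Matrix.mem_spectrum_iff_isRoot_charpoly] at hlam ⊢
    have := hlam.map (f := Complex.ofRealHom)
    rwa [← Matrix.charpoly_map] at this
  refine le_csSup (finite_norm_spectrum_ne_one P).bddAbove ⟨lam, hmem, ?_, ?_⟩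
  · exact_mod_cast hne
  · rw [Complex.norm_real, Real.norm_eq_abs]

lemma secondEigRadius_lt_one (hP : P ∈ rowStochastic ℝ (Fin n)) (hprim : P.IsPrimitive) :
    secondEigRadius P < 1 := by
  rw [secondEigRadius]
  rcases Set.eq_empty_or_nonempty
    {r : ℝ | ∃ μ : ℂ, μ ∈ spectrum ℂ (P.map Complex.ofReal) ∧ μ ≠ 1 ∧ r = ‖μ‖} with hS | hS
  · rw [hS, Real.sSup_empty]
    exact one_pos
  · obtain ⟨μ, hμ, hne, hr⟩ := hS.csSup_mem (finite_norm_spectrum_ne_one P)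
    rw [hr]
    exact norm_lt_one_of_mem_spectrum hP hprim hμ hne

lemma exists_eq_const_of_secondEigRadius_lt_abs (hP : P ∈ rowStochastic ℝ (Fin n))
    (hprim : P.IsPrimitive) {lam : ℝ} {x : Fin n → ℝ} (hx : P *ᵥ x = lam • x)
    (hlam : secondEigRadius P < |lam|) : ∃ c : ℝ, x = fun _ => c := by
  rcases eq_or_ne x 0 with rfl | hx0
  · exact ⟨0, rfl⟩
  have hmem : lam ∈ spectrum ℝ P := by
    rw [← Matrix.spectrum_toLin', ← Module.End.hasEigenvalue_iff_mem_spectrum]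
    exact Module.End.hasEigenvalue_of_hasEigenvector
      ⟨Module.End.mem_eigenspace_iff.2 hx, hx0⟩
  obtain rfl : lam = 1 := of_not_not fun hne => hlam.not_ge (abs_le_secondEigRadius hmem hne)
  exact exists_eq_const_of_mulVec_eq_smul hP hprim hx (norm_one (α := ℝ)).ge

end SecondEigRadius

section SymmetricContraction

variable {𝕜 E : Type*} [RCLike 𝕜] [NormedAddCommGroup E] [InnerProductSpace 𝕜 E]
  [FiniteDimensional 𝕜 E] {T : E →ₗ[𝕜] E} {ρ : ℝ}

lemma norm_apply_le_of_inner_eigenvector_eq_zero (hT : T.IsSymmetric) (hρ : 0 ≤ ρ) {u : E}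
    (hu : ∀ (lam : ℝ) (w : E), T w = (lam : 𝕜) • w → ρ < |lam| → inner 𝕜 w u = 0) :
    ‖T u‖ ≤ ρ * ‖u‖ := by
  let b := hT.eigenvectorBasis rfl
  have hcoord (i) : ‖inner 𝕜 (b i) (T u)‖ ^ 2 ≤ ρ ^ 2 * ‖inner 𝕜 (b i) u‖ ^ 2 := by
    have hbi : T (b i) = (hT.eigenvalues rfl i : 𝕜) • b i := hT.apply_eigenvectorBasis rfl i
    rw [← hT, hbi, inner_smul_left, norm_mul, RCLike.norm_conj, RCLike.norm_ofReal, ← mul_pow]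
    rcases le_or_gt |hT.eigenvalues rfl i| ρ with hle | hlt
    · gcongr
    · simp [hu _ _ hbi hlt]
  refine le_of_sq_le_sq ?_ (by positivity)
  calc ‖T u‖ ^ 2 = ∑ i, ‖inner 𝕜 (b i) (T u)‖ ^ 2 := (b.sum_sq_norm_inner_right _).symm
    _ ≤ ∑ i, ρ ^ 2 * ‖inner 𝕜 (b i) u‖ ^ 2 := Finset.sum_le_sum fun i _ => hcoord i
    _ = (ρ * ‖u‖) ^ 2 := by rw [← Finset.mul_sum, b.sum_sq_norm_inner_right, mul_pow]

lemma norm_starProjection_orthogonal_apply_le (hT : T.IsSymmetric) (hρ : 0 ≤ ρ)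
    {K : Submodule 𝕜 E} (hTK : ∀ w ∈ K, T w ∈ K)
    (hK : ∀ (lam : ℝ) (w : E), T w = (lam : 𝕜) • w → ρ < |lam| → w ∈ K) (u : E) :
    ‖Kᗮ.starProjection (T u)‖ ≤ ρ * ‖Kᗮ.starProjection u‖ := by
  have hproj : Kᗮ.starProjection (T u) = Kᗮ.starProjection (T (Kᗮ.starProjection u)) := by
    have hmem := hTK _ (K.starProjection_apply_mem u)
    conv_lhs => rw [← K.starProjection_add_starProjection_orthogonal u, map_add, map_add]
    rw [(Submodule.starProjection_apply_eq_zero_iff _).2 (K.le_orthogonal_orthogonal hmem),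
      zero_add]
  rw [hproj]
  refine (Kᗮ.norm_starProjection_apply_le _).trans
    (norm_apply_le_of_inner_eigenvector_eq_zero hT hρ fun lam w hw hlam => ?_)
  exact Submodule.inner_right_of_mem_orthogonal (hK lam w hw hlam)
    (Kᗮ.starProjection_apply_mem u)

end SymmetricContraction

section Reversible

open scoped InnerProductSpace

variable {ι : Type*} [Fintype ι] {d : ι → ℝ}

/-- The identification of `ℓ²(ι, d)` with `EuclideanSpace ℝ ι`, scaling the `i`-th coordinate by
`√(d i)`. It turns a reversible Markov kernel with weights `d` into a symmetric operator. -/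
noncomputable def weightedEquiv (d : ι → ℝ) (hd : ∀ i, 0 < d i) :
    (ι → ℝ) ≃L[ℝ] EuclideanSpace ℝ ι :=
  (ContinuousLinearEquiv.piCongrRight fun i => ContinuousLinearEquiv.unitsEquivAut ℝ
    (Units.mk0 √(d i) (Real.sqrt_pos.2 (hd i)).ne')).trans (EuclideanSpace.equiv ι ℝ).symm

/-- The component of a vector orthogonal to the constants in `ℓ²(ι, d)`; its norm is the
`d`-weighted standard deviation, up to normalisation. -/
noncomputable def deviation (d : ι → ℝ) (hd : ∀ i, 0 < d i) :
    (ι → ℝ) →L[ℝ] EuclideanSpace ℝ ι :=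
  (ℝ ∙ weightedEquiv d hd 1)ᗮ.starProjection ∘L (weightedEquiv d hd).toContinuousLinearMap

lemma inner_weightedEquiv (hd : ∀ i, 0 < d i) (x y : ι → ℝ) :
    ⟪weightedEquiv d hd x, weightedEquiv d hd y⟫_ℝ = ∑ i, d i * (x i * y i) := by
  rw [PiLp.inner_apply]
  refine Finset.sum_congr rfl fun i _ => ?_
  have hx (z : ι → ℝ) : weightedEquiv d hd z i = z i * √(d i) := rfl
  rw [hx, hx, RCLike.inner_apply, conj_trivial]
  linear_combination (x i * y i) * Real.mul_self_sqrt (hd i).le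

lemma inner_weightedEquiv_mulVec (hd : ∀ i, 0 < d i) {P : Matrix ι ι ℝ}
    (hdP : ∀ i j, d i * P i j = d j * P j i) (x y : ι → ℝ) :
    ⟪weightedEquiv d hd (P *ᵥ x), weightedEquiv d hd y⟫_ℝ =
      ⟪weightedEquiv d hd x, weightedEquiv d hd (P *ᵥ y)⟫_ℝ := by
  simp only [inner_weightedEquiv, Matrix.mulVec, dotProduct, Finset.sum_mul, Finset.mul_sum]
  rw [Finset.sum_comm]
  refine Finset.sum_congr rfl fun j _ => Finset.sum_congr rfl fun i _ => ?_
  linear_combination x j * y i * hdP i j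

lemma exists_norm_sub_const_le_mul_norm_deviation (hd : ∀ i, 0 < d i) (w : ι → ℝ) :
    ∃ t : ℝ, ‖w - fun _ => t‖ ≤
      ‖((weightedEquiv d hd).symm : EuclideanSpace ℝ ι →L[ℝ] ι → ℝ)‖ * ‖deviation d hd w‖ := by
  set S := weightedEquiv d hd
  obtain ⟨t, ht⟩ := Submodule.mem_span_singleton.1 ((ℝ ∙ S 1).starProjection_apply_mem (S w))
  have hconst : (fun _ => t) = t • (1 : ι → ℝ) := funext fun _ => (mul_one t).symm
  have hdev : S (w - fun _ => t) = deviation d hd w := by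
    rw [hconst, map_sub, map_smul, ht, sub_eq_iff_eq_add']
    exact ((ℝ ∙ S 1).starProjection_add_starProjection_orthogonal (S w)).symm
  refine ⟨t, ?_⟩
  have hle := (S.symm : EuclideanSpace ℝ ι →L[ℝ] ι → ℝ).le_opNorm (S (w - fun _ => t))
  rwa [ContinuousLinearEquiv.coe_coe, S.symm_apply_apply, hdev] at hle

lemma norm_deviation_mulVec_le [DecidableEq ι] (hd : ∀ i, 0 < d i) {P : Matrix ι ι ℝ}
    (hP : P ∈ rowStochastic ℝ ι) (hdP : ∀ i j, d i * P i j = d j * P j i) {ρ : ℝ} (hρ : 0 ≤ ρ)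
    (hPρ : ∀ (lam : ℝ) (x : ι → ℝ), P *ᵥ x = lam • x → ρ < |lam| → ∃ c : ℝ, x = fun _ => c)
    (w : ι → ℝ) : ‖deviation d hd (P *ᵥ w)‖ ≤ ρ * ‖deviation d hd w‖ := by
  set S := weightedEquiv d hd
  let T : EuclideanSpace ℝ ι →ₗ[ℝ] EuclideanSpace ℝ ι :=
    S.toLinearMap ∘ₗ P.mulVecLin ∘ₗ S.symm.toLinearMap
  have hTS (x : ι → ℝ) : T (S x) = S (P *ᵥ x) := by simp [T]
  have hT : T.IsSymmetric := fun a b => by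
    obtain ⟨x, rfl⟩ := S.surjective a
    obtain ⟨y, rfl⟩ := S.surjective b
    rw [hTS, hTS]
    exact inner_weightedEquiv_mulVec hd hdP x y
  have hTK : ∀ a ∈ ℝ ∙ S 1, T a ∈ ℝ ∙ S 1 := fun a ha => by
    obtain ⟨t, rfl⟩ := Submodule.mem_span_singleton.1 ha
    rwa [map_smul, hTS, one_vecMul_of_mem_rowStochastic hP]
  have hK (lam : ℝ) (a : EuclideanSpace ℝ ι) (ha : T a = lam • a) (hlam : ρ < |lam|) :
      a ∈ ℝ ∙ S 1 := by
    obtain ⟨x, rfl⟩ := S.surjective a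
    rw [hTS, ← map_smul, S.injective.eq_iff] at ha
    obtain ⟨c, rfl⟩ := hPρ lam x ha hlam
    have hconst : (fun _ => c) = c • (1 : ι → ℝ) := funext fun _ => (mul_one c).symm
    rw [hconst, map_smul]
    exact Submodule.smul_mem _ c (Submodule.mem_span_singleton_self _)
  have hle := norm_starProjection_orthogonal_apply_le hT hρ hTK hK (S w)
  rwa [hTS] at hle

end Reversible

section LogSumExp

variable {ι : Type*} [Fintype ι] {a x y : ι → ℝ}

/-- The log-sum-exp function with weights `a`, of which some may vanish; for `a = 0` its value is
the junk `log 0 = 0`. The HOTS map is half a difference of two such functions. -/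
noncomputable def logSumExp (a x : ι → ℝ) : ℝ :=
  Real.log (∑ j, a j * Real.exp (x j))

/-- The softmax with weights `a`, which is the gradient of `logSumExp a`. -/
noncomputable def softmax (a x : ι → ℝ) (j : ι) : ℝ :=
  a j * Real.exp (x j) / ∑ l, a l * Real.exp (x l)

lemma sum_mul_exp_pos (ha : 0 < a) (x : ι → ℝ) : 0 < ∑ j, a j * Real.exp (x j) := by
  obtain ⟨ha0, j, hj⟩ := Pi.lt_def.1 ha
  exact Finset.sum_pos' (fun l _ => mul_nonneg (ha0 l) (Real.exp_nonneg _))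
    ⟨j, Finset.mem_univ j, mul_pos hj (Real.exp_pos _)⟩

lemma logSumExp_mono (ha : 0 < a) : Monotone (logSumExp a) := fun x _ hxy =>
  Real.log_le_log (sum_mul_exp_pos ha x) (Finset.sum_le_sum fun j _ =>
    mul_le_mul_of_nonneg_left (Real.exp_le_exp.2 (hxy j)) (ha.le j))

lemma apply_eq_of_logSumExp_eq (ha : 0 < a) (hxy : x ≤ y) (h : logSumExp a x = logSumExp a y)
    {j : ι} (hj : 0 < a j) : x j = y j := by
  have hsum : ∑ l, a l * Real.exp (x l) = ∑ l, a l * Real.exp (y l) :=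
    Real.log_injOn_pos (sum_mul_exp_pos ha x) (sum_mul_exp_pos ha y) h
  have hterm := (Finset.sum_eq_sum_iff_of_le fun l _ => mul_le_mul_of_nonneg_left
    (Real.exp_le_exp.2 (hxy l)) (ha.le l)).1 hsum j (Finset.mem_univ j)
  exact Real.exp_injective (mul_left_cancel₀ hj.ne' hterm)

lemma logSumExp_add_const (ha : 0 < a) (x : ι → ℝ) (t : ℝ) :
    logSumExp a (x + fun _ => t) = logSumExp a x + t := by
  simp only [logSumExp, Pi.add_apply, Real.exp_add, ← mul_assoc, ← Finset.sum_mul]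
  rw [Real.log_mul (sum_mul_exp_pos ha x).ne' (Real.exp_pos t).ne', Real.log_exp]

lemma hasFDerivAt_logSumExp (ha : 0 < a) (x : ι → ℝ) :
    HasFDerivAt (logSumExp a)
      (∑ j, softmax a x j • (ContinuousLinearMap.proj j : (ι → ℝ) →L[ℝ] ℝ)) x := by
  have hsum := (HasFDerivAt.fun_sum fun j (_ : j ∈ Finset.univ) =>
    ((hasFDerivAt_apply (𝕜 := ℝ) j x).exp.const_mul (a j))).log (sum_mul_exp_pos ha x).ne'
  refine hsum.congr_fderiv ?_
  simp only [softmax, Finset.smul_sum, smul_smul, div_eq_inv_mul]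

lemma softmax_nonneg (ha : 0 < a) (x : ι → ℝ) (j : ι) : 0 ≤ softmax a x j :=
  div_nonneg (mul_nonneg (ha.le j) (Real.exp_nonneg _)) (sum_mul_exp_pos ha x).le

lemma softmax_pos (ha : 0 < a) (x : ι → ℝ) {j : ι} (hj : 0 < a j) : 0 < softmax a x j :=
  div_pos (mul_pos hj (Real.exp_pos _)) (sum_mul_exp_pos ha x)

lemma sum_mul_exp_add_mul_softmax (ha : 0 < a) (x : ι → ℝ) (t : ℝ) (j : ι) :
    (∑ l, a l * Real.exp (x l + t)) * softmax a x j = a j * Real.exp (x j + t) := by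
  have hsum := (sum_mul_exp_pos ha x).ne'
  simp only [softmax, Real.exp_add, ← mul_assoc, ← Finset.sum_mul]
  field_simp

lemma sum_softmax (ha : 0 < a) (x : ι → ℝ) : ∑ j, softmax a x j = 1 := by
  simp only [softmax, ← Finset.sum_div, div_self (sum_mul_exp_pos ha x).ne']

end LogSumExp

section FlowPotential

variable {ι : Type*} [Fintype ι] {A : Matrix ι ι ℝ}

/-- The convex potential whose critical points are the vectors `v` for which the flow
`A i j * exp (v i - v j)` is balanced at every node, i.e. the fixed points of the HOTS map. -/
noncomputable def flowPotential (A : Matrix ι ι ℝ) (x : ι → ℝ) : ℝ :=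
  ∑ i, ∑ j, A i j * Real.exp (x i - x j)

lemma continuous_flowPotential (A : Matrix ι ι ℝ) : Continuous (flowPotential A) := by
  unfold flowPotential
  fun_prop

lemma flowPotential_sub_const (A : Matrix ι ι ℝ) (x : ι → ℝ) (t : ℝ) :
    flowPotential A (x - fun _ => t) = flowPotential A x := by
  simp [flowPotential]

lemma mul_exp_le_flowPotential (hA : ∀ i j, 0 ≤ A i j) (x : ι → ℝ) (i j : ι) :
    A i j * Real.exp (x i - x j) ≤ flowPotential A x := by
  have hnonneg (i j : ι) : 0 ≤ A i j * Real.exp (x i - x j) :=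
    mul_nonneg (hA i j) (Real.exp_nonneg _)
  calc A i j * Real.exp (x i - x j) ≤ ∑ j, A i j * Real.exp (x i - x j) :=
        Finset.single_le_sum (fun j _ => hnonneg i j) (Finset.mem_univ j)
    _ ≤ flowPotential A x :=
        Finset.single_le_sum (f := fun i => ∑ j, A i j * Real.exp (x i - x j))
          (fun i _ => Finset.sum_nonneg fun j _ => hnonneg i j) (Finset.mem_univ i)

lemma sub_le_log_of_flowPotential_le (hA : ∀ i j, 0 ≤ A i j) {C : ℝ} {i j : ι} (hij : 0 < A i j)
    {x : ι → ℝ} (hx : flowPotential A x ≤ C) : x i - x j ≤ Real.log (C / A i j) := by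
  rw [← Real.log_exp (x i - x j)]
  exact Real.log_le_log (Real.exp_pos _)
    ((le_div_iff₀' hij).2 ((mul_exp_le_flowPotential hA x i j).trans hx))

lemma exists_sub_le_of_flowPotential_le (hA : A.IsIrreducible) (C : ℝ) (i j : ι) :
    ∃ K : ℝ, ∀ x, flowPotential A x ≤ C → x i - x j ≤ K := by
  classical
  obtain ⟨k, -, hk⟩ := (Matrix.isIrreducible_iff_exists_pow_pos hA.nonneg).1 hA i j
  induction k generalizing j with
  | zero =>
    obtain rfl : i = j := by
      by_contra hne
      simp [hne] at hk
    exact ⟨0, fun x _ => (sub_self (x i)).le⟩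
  | succ k ih =>
    rw [pow_succ, mul_apply_pos_iff (Matrix.pow_apply_nonneg hA.nonneg k) hA.nonneg] at hk
    obtain ⟨l, hil, hlj⟩ := hk
    obtain ⟨K, hK⟩ := ih l hil
    refine ⟨K + Real.log (C / A l j), fun x hx => ?_⟩
    linarith [hK x hx, sub_le_log_of_flowPotential_le hA.nonneg hlj hx]

lemma exists_forall_flowPotential_le (hA : A.IsIrreducible) :
    ∃ v, ∀ x, flowPotential A v ≤ flowPotential A x := by
  rcases isEmpty_or_nonempty ι with _ | ⟨⟨o⟩⟩
  · exact ⟨0, fun x => (congrArg _ (Subsingleton.elim _ _)).le⟩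
  choose K hK using exists_sub_le_of_flowPotential_le hA (flowPotential A 0)
  have hbox (x : ι → ℝ) (hx : flowPotential A x ≤ flowPotential A 0) :
      (x - fun _ => x o) ∈ Set.Icc (fun i => -K o i) (fun i => K i o) :=
    ⟨fun i => neg_le.1 ((neg_sub (x i) (x o)).trans_le (hK o i x hx)), fun i => hK i o x hx⟩
  obtain ⟨v, -, hv⟩ := isCompact_Icc.exists_isMinOn ⟨_, hbox 0 le_rfl⟩
    (continuous_flowPotential A).continuousOn
  have hv_sublevel (x : ι → ℝ) (hx : flowPotential A x ≤ flowPotential A 0) :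
      flowPotential A v ≤ flowPotential A x :=
    (hv (hbox x hx)).trans_eq (flowPotential_sub_const A x (x o))
  refine ⟨v, fun x => ?_⟩
  rcases le_total (flowPotential A x) (flowPotential A 0) with hx | hx
  · exact hv_sublevel x hx
  · exact (hv_sublevel 0 le_rfl).trans hx

lemma hasFDerivAt_flowPotential (A : Matrix ι ι ℝ) (v : ι → ℝ) :
    HasFDerivAt (flowPotential A) (∑ i, ∑ j, (A i j * Real.exp (v i - v j)) •
      ((ContinuousLinearMap.proj i : (ι → ℝ) →L[ℝ] ℝ) - ContinuousLinearMap.proj j)) v := by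
  have hproj (i : ι) := hasFDerivAt_apply (𝕜 := ℝ) (F' := fun _ : ι => ℝ) i v
  refine HasFDerivAt.fun_sum fun i _ => HasFDerivAt.fun_sum fun j _ => ?_
  simpa only [smul_smul] using ((hproj i).fun_sub (hproj j)).exp.const_mul (A i j)

lemma flow_balance_of_forall_flowPotential_le {v : ι → ℝ}
    (hv : ∀ x, flowPotential A v ≤ flowPotential A x) (p : ι) :
    ∑ j, A p j * Real.exp (v p - v j) = ∑ i, A i p * Real.exp (v i - v p) := by
  classical
  have hmin : IsLocalMin (flowPotential A) v := .of_forall hv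
  have hcrit := DFunLike.congr_fun
    (hmin.hasFDerivAt_eq_zero (hasFDerivAt_flowPotential A v)) (Pi.single p 1)
  simp only [_root_.sum_apply, _root_.smul_apply, _root_.sub_apply, _root_.zero_apply,
    ContinuousLinearMap.proj_apply, Pi.single_apply, smul_eq_mul,
    mul_sub, mul_ite, mul_one, mul_zero, Finset.sum_sub_distrib, Finset.sum_ite_eq',
    Finset.mem_univ, if_true] at hcrit
  rw [Finset.sum_comm] at hcrit
  simpa [sub_eq_zero] using hcrit

end FlowPotential

section Hots

lemma inv_diagonal_of_ne_zero {ι K : Type*} [Fintype ι] [DecidableEq ι] [Field K] {w : ι → K}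
    (hw : ∀ i, w i ≠ 0) : (Matrix.diagonal w)⁻¹ = Matrix.diagonal w⁻¹ := by
  refine Matrix.inv_eq_right_inv ?_
  rw [Matrix.diagonal_mul_diagonal, ← Matrix.diagonal_one]
  exact congrArg Matrix.diagonal (funext fun i => mul_inv_cancel₀ (hw i))

variable {n : ℕ} {A : Matrix (Fin n) (Fin n) ℝ} {v : Fin n → ℝ}

lemma hotsMap_apply (A : Matrix (Fin n) (Fin n) ℝ) (x : Fin n → ℝ) (i : Fin n) :
    hotsMap A x i = 1 / 2 * (logSumExp (Aᵀ i) x - logSumExp (A i) (-x)) :=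
  rfl

lemma isTopical_hotsMap (hrow : ∀ i, 0 < A i) (hcol : ∀ i, 0 < Aᵀ i) : IsTopical (hotsMap A) where
  monotone x y hxy i := by
    rw [hotsMap_apply, hotsMap_apply]
    linarith [logSumExp_mono (hcol i) hxy, logSumExp_mono (hrow i) (neg_le_neg hxy)]
  map_add_const x t := by
    funext i
    have hneg : -(x + fun _ => t) = -x + fun _ => -t := neg_add x _
    simp only [hotsMap_apply, Pi.add_apply, hneg, logSumExp_add_const (hcol i),
      logSumExp_add_const (hrow i)]
    ring

lemma apply_eq_of_hotsMap_apply_eq (hrow : ∀ i, 0 < A i) (hcol : ∀ i, 0 < Aᵀ i)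
    ⦃x y : Fin n → ℝ⦄ (hxy : x ≤ y) ⦃i j : Fin n⦄ (h : hotsMap A x i = hotsMap A y i)
    (hij : 0 < (A + Aᵀ) i j) : x j = y j := by
  rw [hotsMap_apply, hotsMap_apply] at h
  have hin := logSumExp_mono (hcol i) hxy
  have hout := logSumExp_mono (hrow i) (neg_le_neg hxy)
  rcases lt_or_lt_of_add_lt_add ((add_zero 0).trans_lt hij) with hA | hA
  · exact neg_inj.1 (apply_eq_of_logSumExp_eq (hrow i) (neg_le_neg hxy) (by linarith) hA).symm
  · exact apply_eq_of_logSumExp_eq (hcol i) hxy (by linarith) hA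

lemma hotsMap_apply_eq_iff (hrow : ∀ i, 0 < A i) (hcol : ∀ i, 0 < Aᵀ i) {i : Fin n} :
    hotsMap A v i = v i ↔
      ∑ j, A i j * Real.exp (v i - v j) = ∑ j, A j i * Real.exp (v j - v i) := by
  have hout : 0 < ∑ j, A i j * Real.exp (v i - v j) ∧
      Real.log (∑ j, A i j * Real.exp (v i - v j)) = logSumExp (A i) (-v) + v i := by
    have hshift (j : Fin n) : v i - v j = (-v + fun _ => v i : Fin n → ℝ) j :=
      (neg_add_eq_sub _ _).symm
    simp only [hshift]
    exact ⟨sum_mul_exp_pos (hrow i) _, logSumExp_add_const (hrow i) _ _⟩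
  have hin : 0 < ∑ j, A j i * Real.exp (v j - v i) ∧
      Real.log (∑ j, A j i * Real.exp (v j - v i)) = logSumExp (Aᵀ i) v + -v i := by
    have hshift (j : Fin n) : v j - v i = (v + fun _ => -v i : Fin n → ℝ) j := sub_eq_add_neg _ _
    simp only [hshift]
    exact ⟨sum_mul_exp_pos (hcol i) _, logSumExp_add_const (hcol i) _ _⟩
  rw [← Real.log_injOn_pos.eq_iff hout.1 hin.1, hout.2, hin.2, hotsMap_apply]
  constructor <;> intro h <;> linarith

lemma isFixedPt_hotsMap_of_forall_flowPotential_le (hrow : ∀ i, 0 < A i) (hcol : ∀ i, 0 < Aᵀ i)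
    (hv : ∀ x, flowPotential A v ≤ flowPotential A x) : Function.IsFixedPt (hotsMap A) v :=
  funext fun i => (hotsMap_apply_eq_iff hrow hcol).2 (flow_balance_of_forall_flowPotential_le hv i)

lemma hotsJacMatrix_apply (hrow : ∀ i, 0 < A i) (hcol : ∀ i, 0 < Aᵀ i) (v : Fin n → ℝ)
    (i j : Fin n) :
    hotsJacMatrix A v i j = 1 / 2 * (softmax (Aᵀ i) v j + softmax (A i) (-v) j) := by
  have hin (i) : ∑ l, A l i * Real.exp (v l) ≠ 0 := (sum_mul_exp_pos (hcol i) v).ne'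
  have hout (i) : ∑ l, A i l * Real.exp (-v l) ≠ 0 := (sum_mul_exp_pos (hrow i) (-v)).ne'
  rw [hotsJacMatrix, inv_diagonal_of_ne_zero hin, inv_diagonal_of_ne_zero hout]
  simp only [softmax, div_eq_inv_mul, Matrix.smul_apply, Matrix.add_apply, Matrix.mul_diagonal,
    Matrix.diagonal_mul, Matrix.transpose_apply, Pi.inv_apply, Pi.neg_apply, smul_eq_mul,
    mul_assoc]

lemma hasFDerivAt_hotsMap (hrow : ∀ i, 0 < A i) (hcol : ∀ i, 0 < Aᵀ i) (v : Fin n → ℝ) :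
    HasFDerivAt (hotsMap A) (hotsJacMatrix A v).mulVecLin.toContinuousLinearMap v := by
  rw [hasFDerivAt_pi']
  intro i
  have hneg : HasFDerivAt (fun x : Fin n → ℝ => -x) (-.id ℝ (Fin n → ℝ)) v :=
    (hasFDerivAt_id v).fun_neg
  have hi := ((hasFDerivAt_logSumExp (hcol i) v).fun_sub
    ((hasFDerivAt_logSumExp (hrow i) (-v)).comp v hneg)).const_mul (1 / 2)
  refine hi.congr_fderiv (ContinuousLinearMap.ext fun w => ?_)
  simp [Matrix.mulVec, dotProduct, hotsJacMatrix_apply hrow hcol, mul_assoc, add_mul, mul_add,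
    Finset.sum_add_distrib, ← Finset.mul_sum]

lemma hotsJacMatrix_mem_rowStochastic (hrow : ∀ i, 0 < A i) (hcol : ∀ i, 0 < Aᵀ i)
    (v : Fin n → ℝ) : hotsJacMatrix A v ∈ rowStochastic ℝ (Fin n) := by
  refine mem_rowStochastic_iff_sum.2 ⟨fun i j => ?_, fun i => ?_⟩
  · rw [hotsJacMatrix_apply hrow hcol]
    linarith [softmax_nonneg (hcol i) v j, softmax_nonneg (hrow i) (-v) j]
  · simp only [hotsJacMatrix_apply hrow hcol, ← Finset.mul_sum, Finset.sum_add_distrib,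
      sum_softmax (hcol i), sum_softmax (hrow i)]
    norm_num

lemma isPrimitive_hotsJacMatrix (hprim : (A + Aᵀ).IsPrimitive) (hrow : ∀ i, 0 < A i)
    (hcol : ∀ i, 0 < Aᵀ i) (v : Fin n → ℝ) : (hotsJacMatrix A v).IsPrimitive := by
  refine isPrimitive_of_forall_pos_imp hprim
    (fun _ _ => nonneg_of_mem_rowStochastic (hotsJacMatrix_mem_rowStochastic hrow hcol v))
    fun i j hij => ?_
  rw [hotsJacMatrix_apply hrow hcol]
  have hin := softmax_nonneg (hcol i) v j
  have hout := softmax_nonneg (hrow i) (-v) j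
  rcases lt_or_lt_of_add_lt_add ((add_zero 0).trans_lt hij) with hA | hA
  · linarith [softmax_pos (hrow i) (-v) hA]
  · linarith [softmax_pos (hcol i) v hA]

lemma secondEigRadius_hotsJacMatrix_lt_one (hprim : (A + Aᵀ).IsPrimitive) (hrow : ∀ i, 0 < A i)
    (hcol : ∀ i, 0 < Aᵀ i) (v : Fin n → ℝ) : secondEigRadius (hotsJacMatrix A v) < 1 :=
  secondEigRadius_lt_one (hotsJacMatrix_mem_rowStochastic hrow hcol v)
    (isPrimitive_hotsJacMatrix hprim hrow hcol v)

/- The weights are the throughputs of the nodes in the balanced flow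
`A i j * exp (v i - v j)`. -/
lemma exists_detailedBalance_hotsJacMatrix (hrow : ∀ i, 0 < A i) (hcol : ∀ i, 0 < Aᵀ i)
    (hv : Function.IsFixedPt (hotsMap A) v) :
    ∃ d : Fin n → ℝ, (∀ i, 0 < d i) ∧
      ∀ i j, d i * hotsJacMatrix A v i j = d j * hotsJacMatrix A v j i := by
  have hin (i j) : (∑ l, A l i * Real.exp (v l - v i)) * softmax (Aᵀ i) v j =
      A j i * Real.exp (v j - v i) := by
    simpa only [sub_eq_add_neg, Matrix.transpose_apply] using
      sum_mul_exp_add_mul_softmax (hcol i) v (-v i) j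
  have hout (i j) : (∑ l, A l i * Real.exp (v l - v i)) * softmax (A i) (-v) j =
      A i j * Real.exp (v i - v j) := by
    rw [← (hotsMap_apply_eq_iff hrow hcol).1 (congrFun hv i)]
    simpa only [Pi.neg_apply, neg_add_eq_sub] using
      sum_mul_exp_add_mul_softmax (hrow i) (-v) (v i) j
  refine ⟨fun i => ∑ l, A l i * Real.exp (v l - v i),
    fun i => sum_mul_exp_pos (hcol i) fun l => v l - v i, fun i j => ?_⟩
  rw [hotsJacMatrix_apply hrow hcol, hotsJacMatrix_apply hrow hcol]
  linear_combination (hin i j + hout i j - hin j i - hout j i) / 2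

theorem exists_tendsto_iterate_hotsMap (hprim : (A + Aᵀ).IsPrimitive) (hrow : ∀ i, 0 < A i)
    (hcol : ∀ i, 0 < Aᵀ i) (hv : Function.IsFixedPt (hotsMap A) v) (x : Fin n → ℝ) :
    ∃ c : ℝ, Tendsto (fun k => (hotsMap A)^[k] x) atTop (nhds (v + fun _ => c)) := by
  have htop := isTopical_hotsMap hrow hcol
  obtain ⟨m, -, hm⟩ := hprim.exists_pos_pow
  exact htop.exists_tendsto_iterate hv (fun _ _ hxy i hi => funext fun j =>
    iterate_apply_eq_of_pow_apply_pos htop.monotone hprim.nonneg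
      (apply_eq_of_hotsMap_apply_eq hrow hcol) m hxy hi (hm i j)) x

theorem limsup_norm_iterate_hotsMap_sub_rpow_le (hprim : (A + Aᵀ).IsPrimitive)
    (hrow : ∀ i, 0 < A i) (hcol : ∀ i, 0 < Aᵀ i) (hv : Function.IsFixedPt (hotsMap A) v)
    {x : Fin n → ℝ} {c : ℝ}
    (hx : Tendsto (fun k => (hotsMap A)^[k] x) atTop (nhds (v + fun _ => c))) :
    limsup (fun k : ℕ => ‖(hotsMap A)^[k] x - (v + fun _ => c)‖ ^ (1 / (k : ℝ))) atTop ≤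
      secondEigRadius (hotsJacMatrix A v) := by
  have htop := isTopical_hotsMap hrow hcol
  have hP := hotsJacMatrix_mem_rowStochastic hrow hcol v
  have hρ := secondEigRadius_nonneg (hotsJacMatrix A v)
  obtain ⟨d, hd, hdP⟩ := exists_detailedBalance_hotsJacMatrix hrow hcol hv
  exact htop.limsup_norm_iterate_sub_rpow_le (htop.isFixedPt_add_const hv c)
    (htop.hasFDerivAt_add_const (hasFDerivAt_hotsMap hrow hcol v) c) hx hρ
    (norm_deviation_mulVec_le hd hP hdP hρ fun _ _ hw hlam =>
      exists_eq_const_of_secondEigRadius_lt_abs hP (isPrimitive_hotsJacMatrix hprim hrow hcol v)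
        hw hlam)
    (exists_norm_sub_const_le_mul_norm_deviation hd)

end Hots

/-- Convergence of the ideal HOTS algorithm: if `A` is irreducible and `A + Aᵀ` is primitive,
the fixed point exists and the fixed point iteration converges linearly at rate `ρ₂ < 1`. -/
theorem idealHots_converges {n : ℕ} (A : Matrix (Fin n) (Fin n) ℝ)
    (hA : ∀ i j, 0 ≤ A i j)
    (hrow : ∀ i, ∃ j, 0 < A i j) (hcol : ∀ j, ∃ i, 0 < A i j)
    (hirr : ∀ i j, ∃ k : ℕ, 1 ≤ k ∧ 0 < (A ^ k) i j)
    (hprim : ∃ k : ℕ, 1 ≤ k ∧ ∀ i j, 0 < ((A + Aᵀ) ^ k) i j) :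
    ∃ v : Fin n → ℝ, hotsMap A v = v ∧
      secondEigRadius (hotsJacMatrix A v) < 1 ∧
      ∀ x : Fin n → ℝ, ∃ c : ℝ,
        Tendsto (fun k => (hotsMap A)^[k] x) atTop (nhds (v + fun _ => c)) ∧
        limsup (fun k : ℕ =>
            ‖(hotsMap A)^[k] x - (v + fun _ => c)‖ ^ (1 / (k : ℝ)))
          atTop ≤ secondEigRadius (hotsJacMatrix A v) := by
  have hrow_pos : ∀ i, 0 < A i := fun i => Pi.lt_def.2 ⟨hA i, hrow i⟩
  have hcol_pos : ∀ i, 0 < Aᵀ i := fun i => Pi.lt_def.2 ⟨fun j => hA j i, hcol i⟩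
  have hirreducible : A.IsIrreducible := (Matrix.isIrreducible_iff_exists_pow_pos hA).2 hirr
  have hprimitive : (A + Aᵀ).IsPrimitive := ⟨fun i j => add_nonneg (hA i j) (hA j i), hprim⟩
  obtain ⟨v, hv_min⟩ := exists_forall_flowPotential_le hirreducible
  have hv := isFixedPt_hotsMap_of_forall_flowPotential_le hrow_pos hcol_pos hv_min
  refine ⟨v, hv, secondEigRadius_hotsJacMatrix_lt_one hprimitive hrow_pos hcol_pos v, fun x => ?_⟩
  obtain ⟨c, hc⟩ := exists_tendsto_iterate_hotsMap hprimitive hrow_pos hcol_pos hv x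
  exact ⟨c, hc, limsup_norm_iterate_hotsMap_sub_rpow_le hprimitive hrow_pos hcol_pos hv hc⟩
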